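/- arXiv:2008.13098 — 2 statements merged into one kernel-verified Lean document; each statement's English description precedes it below -/
import Mathlib

section
/- Adaptive gradient method with an inexact model (uniform constant). Under the hypotheses of the general bound for the adaptive gradient method, assume additionally that there is a constant L > 0 with L_{k+1} ≤ 2L for all 0 ≤ k ≤ N−1 (as is guaranteed when a (δ_k, L, ‖·‖)-model of f exists at every x_k and L_0 ≤ 2L). Then A_N ≥ N/(2L) and f(x̄_N) − f(x_*) ≤ 2LR²/N + (2L/N) Σ_{k=0}^{N-1} δ̃_k + (2/A_N) Σ_{k=0}^{N-1} α_{k+1} δ_k, where α_{k+1} = 1/L_{k+1}, A_N = Σ_{k=0}^{N-1} α_{k+1}, x̄_N = (1/A_N) Σ_{k=0}^{N-1} α_{k+1} x_{k+1}, and V[x_0](x_*) ≤ R². -/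
/-!
Each step of the method satisfies the one-step inequality
`α f(x₊) ≤ α f(z) + V[x](z) - V[x₊](z) + δ̃ + 2 α δ` for every `z ∈ Q`
(`one_step_bound`). It combines the first-order optimality condition for the inexact
prox-step (`prox_step_bound`: the subgradient inequality is tested along the segment from `x₊`
to `z`, where convexity of `ψ` splits off the derivative of `d`), the three-point identity for
`V`, the lower bound `V[x](x₊) ≥ ‖x₊ - x‖² / 2` (`half_sq_le_bregman`), and the descent
condition. Summing over the iterations telescopes the divergences, Jensen's inequality passes to
the averaged iterate, and `A ≥ N / (2 L)` converts `1 / A` into `2 L / N`.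
-/

open Finset RealInnerProductSpace

section Helpers

variable {F : Type*} [NormedAddCommGroup F] [InnerProductSpace ℝ F] [CompleteSpace F]

/-- A gradient relative to a convex set yields the one-sided directional derivatives along the
segments of the set. -/
lemma tendsto_segment_quotient {Q : Set F} (hQ : Convex ℝ Q) {d : F → ℝ} {g y z : F}
    (hd : HasGradientWithinAt d g Q y) (hy : y ∈ Q) (hz : z ∈ Q) :
    Filter.Tendsto (fun t : ℝ => t⁻¹ * (d (t • z + (1 - t) • y) - d y))
      (nhdsWithin 0 (Set.Ioo 0 1)) (nhds ⟪g, z - y⟫) := by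
  have hline : HasDerivAt (fun t : ℝ => t • z + (1 - t) • y) (z - y) 0 := by
    have h1 := (hasDerivAt_id (0 : ℝ)).smul_const z
    have h2 := ((hasDerivAt_id (0 : ℝ)).const_sub 1).smul_const y
    have h3 := h1.add h2
    simp only [one_smul, neg_smul, ← sub_eq_add_neg] at h3
    exact h3
  have hmaps : Set.MapsTo (fun t : ℝ => t • z + (1 - t) • y) (Set.Ioo 0 1) Q := by
    intro t ht
    exact hQ hz hy ht.1.le (by linarith [ht.2]) (by ring)
  have hd0 : HasFDerivWithinAt d (InnerProductSpace.toDual ℝ F g) Q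
      ((fun t : ℝ => t • z + (1 - t) • y) 0) := by
    simpa using hd.hasFDerivWithinAt
  have hcomp := hd0.comp_hasDerivWithinAt (0 : ℝ) hline.hasDerivWithinAt hmaps
  rw [hasDerivWithinAt_iff_tendsto_slope' (by simp)] at hcomp
  simpa [slope_fun_def, Function.comp_def] using hcomp

lemma half_sq_le_bregman {Q : Set F} (hQ : Convex ℝ Q) {d : F → ℝ} {g y z : F} {r : ℝ}
    (hd : HasGradientWithinAt d g Q y) (hy : y ∈ Q) (hz : z ∈ Q)
    (hstrong : ∀ t : ℝ, t ∈ Set.Icc (0 : ℝ) 1 →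
      d (t • z + (1 - t) • y) ≤ t * d z + (1 - t) * d y - t * (1 - t) / 2 * r ^ 2) :
    r ^ 2 / 2 ≤ d z - d y - ⟪g, z - y⟫ := by
  have : (nhdsWithin (0 : ℝ) (Set.Ioo 0 1)).NeBot := left_nhdsWithin_Ioo_neBot one_pos
  have hlim : Filter.Tendsto (fun t : ℝ => d z - d y - (1 - t) / 2 * r ^ 2)
      (nhdsWithin 0 (Set.Ioo 0 1)) (nhds (d z - d y - (1 - 0) / 2 * r ^ 2)) :=
    (Continuous.tendsto (by fun_prop) 0).mono_left nhdsWithin_le_nhds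
  have hle := le_of_tendsto_of_tendsto (tendsto_segment_quotient hQ hd hy hz) hlim (by
    filter_upwards [self_mem_nhdsWithin] with t ht
    rw [inv_mul_le_iff₀ ht.1]
    linarith [hstrong t ⟨ht.1.le, ht.2.le⟩])
  linarith

/-- First-order optimality for an inexact prox-step with `y = x₊`: a lower subgradient bound for
`φ = a ψ + d - ⟪p, ·⟫` passes to `a ψ` once the gradient `g - p` of the smooth part is
subtracted. -/
lemma prox_step_bound {Q : Set F} (hQ : Convex ℝ Q) {d ψ : F → ℝ} {g p h y z : F} {a ε : ℝ}
    (ha : 0 ≤ a) (hψ : ConvexOn ℝ Q ψ)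
    (hd : HasGradientWithinAt d g Q y) (hy : y ∈ Q) (hz : z ∈ Q)
    (hsub : ∀ w ∈ Q, a * ψ y + d y + ⟪h, w - y⟫ ≤ a * ψ w + d w - ⟪p, w - y⟫)
    (hh : -ε ≤ ⟪h, z - y⟫) :
    a * ψ y - ε ≤ a * ψ z + ⟪g - p, z - y⟫ := by
  have : (nhdsWithin (0 : ℝ) (Set.Ioo 0 1)).NeBot := left_nhdsWithin_Ioo_neBot one_pos
  have hle := ge_of_tendsto (b := a * ψ y - a * ψ z + ⟪h, z - y⟫ + ⟪p, z - y⟫)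
    (tendsto_segment_quotient hQ hd hy hz) (by
      filter_upwards [self_mem_nhdsWithin] with t ht
      rw [le_inv_mul_iff₀ ht.1]
      have h1t : 0 ≤ 1 - t := by linarith [ht.2]
      have hs := hsub _ (hQ hz hy ht.1.le h1t (by ring))
      have hc := mul_le_mul_of_nonneg_left (hψ.2 hz hy ht.1.le h1t (by ring)) ha
      have e : t • z + (1 - t) • y - y = t • (z - y) := by module
      rw [e, inner_smul_right, inner_smul_right] at hs
      simp only [smul_eq_mul] at hc
      linarith)
  rw [inner_sub_left]
  linarith

/-- The one-step inequality, for a step from `u` to `y = x₊`; `gu` and `gy` are the gradients of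
`d` at these points and `r` is the (non-Euclidean) length of the step. -/
lemma one_step_bound {Q : Set F} (hQ : Convex ℝ Q) {f d ψ : F → ℝ} {gu gy h u y z : F}
    {l r δ ε c c' : ℝ} (hl : 0 < l) (hψ : ConvexOn ℝ Q ψ)
    (hu : u ∈ Q) (hy : y ∈ Q) (hz : z ∈ Q)
    (hdu : HasGradientWithinAt d gu Q u) (hdy : HasGradientWithinAt d gy Q y)
    (hstrong : ∀ t : ℝ, t ∈ Set.Icc (0 : ℝ) 1 →
      d (t • y + (1 - t) • u) ≤ t * d y + (1 - t) * d u - t * (1 - t) / 2 * r ^ 2)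
    (hlow : c + ψ z ≤ f z) (hnext : f y ≤ c' + δ)
    (hdesc : c' ≤ c + ψ y + l / 2 * r ^ 2 + δ)
    (hsub : ∀ w ∈ Q, (1 / l) * ψ w + (d w - d u - ⟪gu, w - u⟫) ≥
      (1 / l) * ψ y + (d y - d u - ⟪gu, y - u⟫) + ⟪h, w - y⟫)
    (hh : -ε ≤ ⟪h, z - y⟫) :
    (1 / l) * (f y - f z) ≤ (d z - d u - ⟪gu, z - u⟫) - (d z - d y - ⟪gy, z - y⟫)
      + ε + 2 * ((1 / l) * δ) := by
  have hl' : 0 ≤ 1 / l := by positivity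
  have hV := half_sq_le_bregman hQ hdu hu hy hstrong
  have hprox := prox_step_bound (p := gu) hQ hl' hψ hdy hy hz (fun w hw => by
    have := hsub w hw
    simp only [inner_sub_right] at this ⊢
    linarith) hh
  have hf := mul_le_mul_of_nonneg_left
    (show f y - f z ≤ ψ y - ψ z + l / 2 * r ^ 2 + 2 * δ by linarith) hl'
  have e : (1 / l) * (ψ y - ψ z + l / 2 * r ^ 2 + 2 * δ) =
      (1 / l) * ψ y - (1 / l) * ψ z + r ^ 2 / 2 + 2 * ((1 / l) * δ) := by
    field_simp
  simp only [inner_sub_right, inner_sub_left] at hV hprox ⊢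
  linarith

end Helpers

/-- **Adaptive gradient method with an inexact model (uniform constant).**
`E = ℝⁿ` with the standard inner product; `nrm` is a (general) norm on `E`;
`d` is a continuously differentiable, `1`-strongly convex (w.r.t. `nrm`) prox-function
with gradient `Dd`, and `V y x = d x - d y - ⟪Dd y, x - y⟫` is the Bregman divergence.
`ψ k` is the model `ψ_{δ_k}(·, x_k)` with value `fδ k` at `x k`. -/
theorem adaptive_gradient_method_uniform_constant
    {n : ℕ} (Q : Set (EuclideanSpace ℝ (Fin n)))
    (hQne : Q.Nonempty) (hQclosed : IsClosed Q) (hQconv : Convex ℝ Q)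
    (f : EuclideanSpace ℝ (Fin n) → ℝ) (hfconv : ConvexOn ℝ Q f)
    -- a general norm `nrm` on `ℝⁿ`
    (nrm : EuclideanSpace ℝ (Fin n) → ℝ)
    (hnrm_zero : ∀ z, nrm z = 0 ↔ z = 0)
    (hnrm_smul : ∀ (c : ℝ) z, nrm (c • z) = |c| * nrm z)
    (hnrm_add : ∀ z w, nrm (z + w) ≤ nrm z + nrm w)
    -- the prox-function `d`, continuously differentiable and 1-strongly convex w.r.t. `nrm`
    (d : EuclideanSpace ℝ (Fin n) → ℝ)
    (Dd : EuclideanSpace ℝ (Fin n) → EuclideanSpace ℝ (Fin n))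
    (hd_diff : ∀ z ∈ Q, HasGradientWithinAt d (Dd z) Q z)
    (hd_cont : ContinuousOn Dd Q)
    (hd_strong : ∀ z ∈ Q, ∀ w ∈ Q, ∀ t : ℝ, t ∈ Set.Icc (0 : ℝ) 1 →
      d (t • z + (1 - t) • w) ≤
        t * d z + (1 - t) * d w - t * (1 - t) / 2 * nrm (z - w) ^ 2)
    -- Bregman divergence
    (V : EuclideanSpace ℝ (Fin n) → EuclideanSpace ℝ (Fin n) → ℝ)
    (hV : ∀ y z, V y z = d z - d y - ⟪Dd y, z - y⟫)
    -- the method data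
    (N : ℕ) (hN : 0 < N)
    (x : ℕ → EuclideanSpace ℝ (Fin n)) (hxQ : ∀ k, x k ∈ Q)
    (δ δt : ℕ → ℝ) (hδ : ∀ k, 0 ≤ δ k) (hδt : ∀ k, 0 ≤ δt k)
    (L : ℕ → ℝ) (hL : ∀ k, 0 < L (k + 1))
    (α : ℕ → ℝ) (hα : ∀ k, α (k + 1) = 1 / L (k + 1))
    (A : ℝ) (hA : A = ∑ k ∈ range N, α (k + 1))
    -- `ψ k = ψ_{δ_k}(·, x_k)` with value `fδ k = f_{δ_k}(x_k)`:
    -- a `(δ_k, L̄_{k+1}, nrm)`-model of `f` at `x_k` for some `L̄_{k+1} > 0`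
    (ψ : ℕ → EuclideanSpace ℝ (Fin n) → ℝ) (fδ : ℕ → ℝ)
    (hmodel : ∀ k, ∃ Lbar : ℝ, 0 < Lbar ∧
      ConvexOn ℝ Q (ψ k) ∧ ψ k (x k) = 0 ∧
      ∀ z ∈ Q, 0 ≤ f z - (fδ k + ψ k z) ∧
        f z - (fδ k + ψ k z) ≤ Lbar / 2 * nrm (z - x k) ^ 2 + δ k)
    -- the value of the model at the next iterate (`f_{δ_k}(x_{k+1})`)
    (fδnext : ℕ → ℝ)
    (hfδnext : ∀ k, 0 ≤ f (x (k + 1)) - fδnext k ∧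
      f (x (k + 1)) - fδnext k ≤ δ k)
    -- descent condition
    (hdescent : ∀ k, fδnext k ≤ fδ k + ψ k (x (k + 1)) +
      L (k + 1) / 2 * nrm (x (k + 1) - x k) ^ 2 + δ k)
    -- `x_{k+1}` is a `δ̃_k`-inexact minimizer of `φ_{k+1}(z) = (1/L_{k+1}) ψ k z + V (x k) z` on `Q`
    (hmin : ∀ k, ∃ h : EuclideanSpace ℝ (Fin n),
      (∀ z ∈ Q, (1 / L (k + 1)) * ψ k z + V (x k) z ≥
        (1 / L (k + 1)) * ψ k (x (k + 1)) + V (x k) (x (k + 1)) + ⟪h, z - x (k + 1)⟫) ∧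
      (∀ z ∈ Q, ⟪h, z - x (k + 1)⟫ ≥ -δt k))
    -- the optimum
    (xstar : EuclideanSpace ℝ (Fin n)) (hxstarQ : xstar ∈ Q)
    (hxstar : ∀ z ∈ Q, f xstar ≤ f z)
    (R : ℝ) (hR : V (x 0) xstar ≤ R ^ 2)
    -- averaged iterate
    (xbar : EuclideanSpace ℝ (Fin n))
    (hxbar : xbar = A⁻¹ • ∑ k ∈ range N, α (k + 1) • x (k + 1))
    -- uniform bound on the adaptive constants
    (Lu : ℝ) (hLu : 0 < Lu) (hLuniform : ∀ k < N, L (k + 1) ≤ 2 * Lu) :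
    A ≥ N / (2 * Lu) ∧
    f xbar - f xstar ≤
      2 * Lu * R ^ 2 / N + (2 * Lu / N) * ∑ k ∈ range N, δt k +
        (2 / A) * ∑ k ∈ range N, α (k + 1) * δ k := by
  have hαpos : ∀ k, 0 < α (k + 1) := fun k => by rw [hα]; exact one_div_pos.2 (hL k)
  have hNpos : (0 : ℝ) < N := by exact_mod_cast hN
  have hAge : (N : ℝ) / (2 * Lu) ≤ A := by
    have h : ∑ _k ∈ range N, 1 / (2 * Lu) ≤ ∑ k ∈ range N, α (k + 1) :=
      sum_le_sum fun k hk => by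
        rw [hα]
        exact one_div_le_one_div_of_le (hL k) (hLuniform k (mem_range.1 hk))
    rw [hA]
    refine le_trans (le_of_eq ?_) h
    rw [sum_const, card_range, nsmul_eq_mul]
    ring
  have hApos : 0 < A := lt_of_lt_of_le (by positivity) hAge
  refine ⟨hAge, ?_⟩
  have hstep : ∀ k, α (k + 1) * (f (x (k + 1)) - f xstar) ≤
      (V (x k) xstar - V (x (k + 1)) xstar) + δt k + 2 * (α (k + 1) * δ k) := by
    intro k
    obtain ⟨_, _, hψ, _, hm⟩ := hmodel k
    obtain ⟨h, hsub, hh⟩ := hmin k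
    simp only [hV] at hsub ⊢
    rw [hα]
    exact one_step_bound hQconv (hL k) hψ (hxQ k) (hxQ (k + 1)) hxstarQ
      (hd_diff _ (hxQ k)) (hd_diff _ (hxQ (k + 1)))
      (hd_strong _ (hxQ (k + 1)) _ (hxQ k)) (by linarith [(hm xstar hxstarQ).1])
      (by linarith [(hfδnext k).2]) (hdescent k) hsub (hh xstar hxstarQ)
  have hVN : 0 ≤ V (x N) xstar := by
    rw [hV]
    exact le_trans (by positivity) (half_sq_le_bregman hQconv (hd_diff _ (hxQ N)) (hxQ N) hxstarQ
      (hd_strong _ hxstarQ _ (hxQ N)))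
  have hsum := sum_le_sum fun k (_ : k ∈ range N) => hstep k
  rw [sum_add_distrib, sum_add_distrib, sum_range_sub' (fun k => V (x k) xstar), ← mul_sum] at hsum
  simp only [mul_sub] at hsum
  rw [sum_sub_distrib, ← sum_mul, ← hA] at hsum
  have hjensen : f xbar ≤ A⁻¹ * ∑ k ∈ range N, α (k + 1) * f (x (k + 1)) := by
    have h := hfconv.map_centerMass_le (t := range N) (w := fun k => α (k + 1))
      (p := fun k => x (k + 1)) (fun k _ => (hαpos k).le) (by rw [← hA]; exact hApos)
      (fun k _ => hxQ (k + 1))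
    simpa only [centerMass, ← hA, ← hxbar, Function.comp_apply, smul_eq_mul] using h
  set S := ∑ k ∈ range N, δt k with hS
  set T := ∑ k ∈ range N, α (k + 1) * δ k
  have hS0 : 0 ≤ S := sum_nonneg fun k _ => hδt k
  have hinv : A⁻¹ ≤ 2 * Lu / N := by
    rw [← inv_div]
    exact inv_anti₀ (by positivity) hAge
  calc f xbar - f xstar
      ≤ A⁻¹ * (∑ k ∈ range N, α (k + 1) * f (x (k + 1)) - A * f xstar) := by
        rw [mul_sub, inv_mul_cancel_left₀ hApos.ne']
        linarith
    _ ≤ A⁻¹ * ((R ^ 2 + S) + 2 * T) :=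
        mul_le_mul_of_nonneg_left (by linarith) (inv_pos.2 hApos).le
    _ = A⁻¹ * (R ^ 2 + S) + 2 / A * T := by ring
    _ ≤ 2 * Lu / N * (R ^ 2 + S) + 2 / A * T := by gcongr
    _ = _ := by ring
end

section
/- Expected rate of the stochastic fast gradient method. In the setting of the fast gradient method with a (δ₁, δ₂, L, ‖·‖₂)-model, suppose the models are random: on a probability space with a filtration (F_k), the iterates x_k, u_k, y_{k+1} are F_k-measurable, the noise terms satisfy E[δ₁^k(x_k, y_{k+1}) | F_k] = 0 and E[δ₁^k(x_*, y_{k+1}) | F_k] = 0 (conditional unbiasedness), and E[δ₂^k] ≤ δ̂₂ for all k, where δ̂₂ ≥ 0. Then after N iterations E[f(x_N)] − f(x_*) ≤ 4LR²/N² + N δ̂₂, where x_* is a minimizer of f on Q with (1/2)‖x_* − x_0‖₂² ≤ R². -/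
open Finset MeasureTheory RealInnerProductSpace

/-!
The proof is the potential-function argument for accelerated gradient methods, carried out pathwise
and integrated only at the end. For every outcome, one iteration satisfies

`A_{k+1} (f(x_{k+1}) - f(x_*)) + ‖x_* - u_{k+1}‖² / 2`
`  ≤ A_k (f(x_k) - f(x_*)) + ‖x_* - u_k‖² / 2`
`    + A_k δ₁^k(x_k, y_{k+1}) + α_{k+1} δ₁^k(x_*, y_{k+1}) + A_{k+1} δ₂^k`

(`fgm_step`). It combines the upper model bound at `x_{k+1}`, convexity of the model along
`x_{k+1} = (α_{k+1} u_{k+1} + A_k x_k) / A_{k+1}`, the identity `L α_{k+1}² = A_{k+1}`, the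
three-point inequality for the proximal step (`prox_three_point`), and the lower model bounds at
`x_k` and `x_*`. Summing over `k < N` and dropping `‖x_* - u_N‖²` leaves a bound of
`A_N (f(x_N) - f(x_*))` by integrable quantities, so the iterates need no moment assumptions.
In expectation the `δ₁` terms vanish because their conditional expectations do, and the `δ₂` terms
contribute at most `N A_N δ̂₂` because `A` is nondecreasing. Dividing by `A_N ≥ N² / (4L)`, which
follows from `α_{k+1} ≥ α_k + 1 / (2L)` (`fgm_alpha_lower`), gives the rate.
-/

/-- Three-point inequality: the objective `‖z - c‖² / 2 + φ z` of a proximal step is `1`-strongly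
convex, so it exceeds its minimum at `p` by at least `‖z - p‖² / 2`. -/
lemma prox_three_point {E : Type*} [NormedAddCommGroup E] [InnerProductSpace ℝ E]
    {Q : Set E} {φ : E → ℝ} (hφ : ConvexOn ℝ Q φ) {c p : E} (hp : p ∈ Q)
    (hmin : ∀ z ∈ Q, (1 / 2) * ‖p - c‖ ^ 2 + φ p ≤ (1 / 2) * ‖z - c‖ ^ 2 + φ z)
    {z : E} (hz : z ∈ Q) :
    (1 / 2) * ‖p - c‖ ^ 2 + φ p + (1 / 2) * ‖z - p‖ ^ 2 ≤ (1 / 2) * ‖z - c‖ ^ 2 + φ z := by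
  have hzc : ‖z - c‖ ^ 2 = ‖p - c‖ ^ 2 + 2 * ⟪p - c, z - p⟫ + ‖z - p‖ ^ 2 := by
    rw [← norm_add_sq_real]
    congr 2
    abel
  -- Minimality tested at `p + t (z - p)`, with the common factor `t` divided out.
  have key : ∀ t : ℝ, 0 < t → t ≤ 1 →
      0 ≤ (φ z - φ p + ⟪p - c, z - p⟫) + t * ((1 / 2) * ‖z - p‖ ^ 2) := by
    intro t ht ht1
    have hw : (1 - t) • p + t • z ∈ Q := hφ.1 hp hz (by linarith) ht.le (by ring)
    have h1 := hmin _ hw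
    have h2 := hφ.2 hp hz (by linarith : (0 : ℝ) ≤ 1 - t) ht.le (by ring)
    simp only [smul_eq_mul] at h2
    have h3 : (1 - t) • p + t • z - c = (p - c) + t • (z - p) := by
      module
    rw [h3, norm_add_sq_real, inner_smul_right, norm_smul, mul_pow, Real.norm_eq_abs,
      sq_abs] at h1
    have h4 : 0 ≤ t * ((φ z - φ p + ⟪p - c, z - p⟫) + t * ((1 / 2) * ‖z - p‖ ^ 2)) := by
      linarith
    exact nonneg_of_mul_nonneg_right h4 ht
  have hlim : 0 ≤ φ z - φ p + ⟪p - c, z - p⟫ := by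
    by_contra! hneg
    set b := (1 / 2) * ‖z - p‖ ^ 2 with hb
    have hb0 : 0 ≤ b := by positivity
    set a := φ z - φ p + ⟪p - c, z - p⟫ with ha
    -- This `t` makes `t * b < -a`, which contradicts `key`.
    have h := key (-a / (b - a)) (by apply div_pos <;> linarith)
      (by rw [div_le_one (by linarith)]; linarith)
    have hd : 0 < b - a := by linarith
    have h5 : a + -a / (b - a) * b = -(a ^ 2) / (b - a) := by
      field_simp
      ring
    rw [h5] at h
    have : -(a ^ 2) / (b - a) < 0 := div_neg_of_neg_of_pos (by nlinarith) hd
    linarith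
  linarith

/-- The potential decrease along one iteration, for a fixed outcome. Here `a = α_{k+1}`, `A = A_k`,
`d` is the error of the upper model bound at the new point, and `e`, `es` are the errors of the lower
bounds at the old point and at the comparison point `xs`. -/
lemma fgm_step {E : Type*} [NormedAddCommGroup E] [InnerProductSpace ℝ E]
    {Q : Set E} {f ψ : E → ℝ} {L a A d e es : ℝ} (ha : 0 < a) (hA : 0 ≤ A)
    (hroot : A + a = L * a ^ 2) {x u y x' u' xs : E}
    (hx : x ∈ Q) (hu' : u' ∈ Q) (hxs : xs ∈ Q)
    (hy : y = (A + a)⁻¹ • (a • u + A • x)) (hx' : x' = (A + a)⁻¹ • (a • u' + A • x))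
    (hψ : ConvexOn ℝ Q ψ)
    (hup : f x' - (f y + ψ x') ≤ L / 2 * ‖x' - y‖ ^ 2 + d)
    (hlow : -e ≤ f x - (f y + ψ x)) (hlows : -es ≤ f xs - (f y + ψ xs))
    (hmin : ∀ z ∈ Q, (1 / 2) * ‖u' - u‖ ^ 2 + a * ψ u' ≤ (1 / 2) * ‖z - u‖ ^ 2 + a * ψ z) :
    (A + a) * (f x' - f xs) + (1 / 2) * ‖xs - u'‖ ^ 2 ≤
      A * (f x - f xs) + (1 / 2) * ‖xs - u‖ ^ 2 + (A * e + a * es + (A + a) * d) := by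
  have hS : 0 < A + a := by linarith
  have h3 := prox_three_point (hψ.smul ha.le) hu' (by simpa using hmin) hxs
  simp only [smul_eq_mul] at h3
  have hdiff : x' - y = ((A + a)⁻¹ * a) • (u' - u) := by
    rw [hx', hy]
    module
  have hnorm : (A + a) * (L / 2 * ‖x' - y‖ ^ 2) = (1 / 2) * ‖u' - u‖ ^ 2 := by
    rw [hdiff, norm_smul, mul_pow, Real.norm_eq_abs, sq_abs]
    have : (A + a) * (L / 2 * (((A + a)⁻¹ * a) ^ 2 * ‖u' - u‖ ^ 2))
        = (L * a ^ 2) * (A + a)⁻¹ * ((1 / 2) * ‖u' - u‖ ^ 2) := by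
      field_simp
    rw [this, ← hroot, mul_inv_cancel₀ hS.ne', one_mul]
  have hconv : (A + a) * ψ x' ≤ a * ψ u' + A * ψ x := by
    have h := hψ.2 hu' hx (by positivity : 0 ≤ (A + a)⁻¹ * a)
      (by positivity : 0 ≤ (A + a)⁻¹ * A) (by field_simp; ring)
    have hx'' : x' = ((A + a)⁻¹ * a) • u' + ((A + a)⁻¹ * A) • x := by
      rw [hx']
      module
    rw [← hx'', smul_eq_mul, smul_eq_mul] at h
    have h' := mul_le_mul_of_nonneg_left h hS.le
    have he : (A + a) * ((A + a)⁻¹ * a * ψ u' + (A + a)⁻¹ * A * ψ x) = a * ψ u' + A * ψ x := by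
      field_simp
    linarith
  have hup' := mul_le_mul_of_nonneg_left hup hS.le
  rw [mul_add, hnorm] at hup'
  have hlow' := mul_le_mul_of_nonneg_left hlow hA
  have hlows' := mul_le_mul_of_nonneg_left hlows ha.le
  linarith

/-- Quadratic growth of the weights: since `A_k = L α_k²`, the equation for `α_{k+1}` reads
`(α_{k+1} - 1 / (2L))² = α_k² + 1 / (4L²)`, and the largest root lies to the right of `1 / (2L)`. -/
lemma fgm_alpha_lower {L : ℝ} (hL : 0 < L) {α A : ℕ → ℝ} (hα0 : α 0 = 0) (hA0 : A 0 = 0)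
    (hαroot : ∀ k, A k + α (k + 1) = L * α (k + 1) ^ 2 ∧
      ∀ β : ℝ, A k + β = L * β ^ 2 → β ≤ α (k + 1))
    (hArec : ∀ k, A (k + 1) = A k + α (k + 1)) (k : ℕ) :
    A k = L * α k ^ 2 ∧ (k : ℝ) ≤ 2 * L * α k := by
  induction k with
  | zero => simp [hα0, hA0]
  | succ k ih =>
    obtain ⟨ih1, ih2⟩ := ih
    obtain ⟨hr, hmax⟩ := hαroot k
    refine ⟨by rw [hArec, hr], ?_⟩
    -- The other root is `1 / L - α_{k+1}`.
    have hother := hmax (1 / L - α (k + 1)) (by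
      have : L * (1 / L - α (k + 1)) ^ 2 = 1 / L - 2 * α (k + 1) + L * α (k + 1) ^ 2 := by
        field_simp
        ring
      rw [this]
      linarith)
    have h1 : 1 ≤ 2 * L * α (k + 1) := by
      have : L * (1 / L) = 1 := by field_simp
      nlinarith
    have hsq : (2 * L * α (k + 1) - 1) ^ 2 = (2 * L * α k) ^ 2 + 1 := by
      rw [ih1] at hr
      linear_combination (-4 * L) * hr
    have h2 : 2 * L * α k ≤ 2 * L * α (k + 1) - 1 :=
      abs_le_of_sq_le_sq' (by linarith) (by linarith) |>.2
    push_cast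
    linarith

/-- **Expected rate of the stochastic fast gradient method.**
The method runs pathwise on a probability space `(Ω, μ)` with filtration `ℱ`;
the random models `ψ k ω` are `(δ₁^k(ω), δ₂^k(ω), L, ‖·‖₂)`-models of `f` at `y_{k+1}(ω)`,
the noises `δ₁` are conditionally unbiased along the iterates, and `E[δ₂^k] ≤ δ̂₂`. -/
theorem stochastic_fast_gradient_method_expected_rate
    {n : ℕ} (Q : Set (EuclideanSpace ℝ (Fin n)))
    (hQne : Q.Nonempty) (hQclosed : IsClosed Q) (hQconv : Convex ℝ Q)
    (f : EuclideanSpace ℝ (Fin n) → ℝ) (hfconv : ConvexOn ℝ Q f)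
    (L : ℝ) (hL : 0 < L)
    (N : ℕ) (hN : 0 < N)
    -- probability space and filtration
    {Ω : Type*} {m0 : MeasurableSpace Ω} (μ : Measure Ω) [IsProbabilityMeasure μ]
    (ℱ : Filtration ℕ m0)
    -- random iterates, measurable w.r.t. the filtration
    (x y u : ℕ → Ω → EuclideanSpace ℝ (Fin n))
    (hxmeas : ∀ k, Measurable[ℱ k] (x k))
    (humeas : ∀ k, Measurable[ℱ k] (u k))
    (hymeas : ∀ k, Measurable[ℱ k] (y (k + 1)))
    (hxQ : ∀ k ω, x k ω ∈ Q) (hyQ : ∀ k ω, y k ω ∈ Q) (huQ : ∀ k ω, u k ω ∈ Q)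
    -- deterministic starting point
    (x0 : EuclideanSpace ℝ (Fin n)) (hx0 : ∀ ω, x 0 ω = x0)
    (hinit : ∀ ω, y 0 ω = x 0 ω ∧ u 0 ω = x 0 ω)
    (α A : ℕ → ℝ) (hα0 : α 0 = 0) (hA0 : A 0 = 0)
    -- `α_{k+1}` is the largest root of `A_k + α = L α²`
    (hαroot : ∀ k, A k + α (k + 1) = L * α (k + 1) ^ 2 ∧
      ∀ β : ℝ, A k + β = L * β ^ 2 → β ≤ α (k + 1))
    (hArec : ∀ k, A (k + 1) = A k + α (k + 1))
    (hy : ∀ k ω, y (k + 1) ω = (A (k + 1))⁻¹ • (α (k + 1) • u k ω + A k • x k ω))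
    -- the random models and noises
    (ψ : ℕ → Ω → EuclideanSpace ℝ (Fin n) → ℝ)
    (δ1 : ℕ → Ω → EuclideanSpace ℝ (Fin n) → EuclideanSpace ℝ (Fin n) → ℝ)
    (δ2 : ℕ → Ω → ℝ)
    (hmodel : ∀ k ω, ConvexOn ℝ Q (ψ k ω) ∧ ψ k ω (y (k + 1) ω) = 0 ∧
      ∀ z ∈ Q, -δ1 k ω z (y (k + 1) ω) ≤ f z - (f (y (k + 1) ω) + ψ k ω z) ∧
        f z - (f (y (k + 1) ω) + ψ k ω z) ≤ L / 2 * ‖z - y (k + 1) ω‖ ^ 2 + δ2 k ω)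
    -- `u_{k+1} = argmin_{z ∈ Q} [(1/2)‖z − u_k‖₂² + α_{k+1} ψ_k(z, y_{k+1})]`, pathwise
    (hmin : ∀ k ω, ∀ z ∈ Q,
      (1 / 2) * ‖u (k + 1) ω - u k ω‖ ^ 2 + α (k + 1) * ψ k ω (u (k + 1) ω) ≤
        (1 / 2) * ‖z - u k ω‖ ^ 2 + α (k + 1) * ψ k ω z)
    (hx : ∀ k ω, x (k + 1) ω = (A (k + 1))⁻¹ • (α (k + 1) • u (k + 1) ω + A k • x k ω))
    -- the optimum
    (xstar : EuclideanSpace ℝ (Fin n)) (hxstarQ : xstar ∈ Q)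
    (hxstar : ∀ z ∈ Q, f xstar ≤ f z)
    (R : ℝ) (hR : (1 / 2) * ‖xstar - x0‖ ^ 2 ≤ R ^ 2)
    -- conditional unbiasedness of the `δ₁` noises along the iterates
    (hδ1int : ∀ k, Integrable (fun ω => δ1 k ω (x k ω) (y (k + 1) ω)) μ)
    (hδ1starint : ∀ k, Integrable (fun ω => δ1 k ω xstar (y (k + 1) ω)) μ)
    (hδ1unbiased : ∀ k, μ[fun ω => δ1 k ω (x k ω) (y (k + 1) ω)|ℱ k] =ᵐ[μ] 0)
    (hδ1starunbiased : ∀ k, μ[fun ω => δ1 k ω xstar (y (k + 1) ω)|ℱ k] =ᵐ[μ] 0)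
    -- bound on the expectation of the `δ₂` noises
    (δ2hat : ℝ) (hδ2hat : 0 ≤ δ2hat)
    (hδ2int : ∀ k, Integrable (δ2 k) μ)
    (hδ2exp : ∀ k, ∫ ω, δ2 k ω ∂μ ≤ δ2hat)
    -- integrability of the final value
    (hfint : Integrable (fun ω => f (x N ω)) μ) :
    (∫ ω, f (x N ω) ∂μ) - f xstar ≤ 4 * L * R ^ 2 / N ^ 2 + N * δ2hat := by
  have hα := fgm_alpha_lower hL hα0 hA0 hαroot hArec
  have hαpos : ∀ k, 0 < α (k + 1) := by
    intro k
    have h := (hα (k + 1)).2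
    have hk : (0 : ℝ) < ((k + 1 : ℕ) : ℝ) := by positivity
    exact pos_of_mul_pos_right (lt_of_lt_of_le hk h) (by positivity)
  have hAnn : ∀ k, 0 ≤ A k := fun k => by
    rw [(hα k).1]
    positivity
  have hAmono : Monotone A := monotone_nat_of_le_succ fun k => by
    rw [hArec]
    linarith [hαpos k]
  set c : ℕ → Ω → ℝ := fun k ω => A k * δ1 k ω (x k ω) (y (k + 1) ω)
    + α (k + 1) * δ1 k ω xstar (y (k + 1) ω) + A (k + 1) * δ2 k ω with hc
  have hpath : ∀ k ω, A k * (f (x k ω) - f xstar) + (1 / 2) * ‖xstar - u k ω‖ ^ 2 ≤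
      R ^ 2 + ∑ i ∈ range k, c i ω := by
    intro k ω
    induction k with
    | zero => simpa [hA0, (hinit ω).2, hx0 ω] using hR
    | succ k ih =>
      obtain ⟨hψ, -, hb⟩ := hmodel k ω
      have h := fgm_step (hαpos k) (hAnn k) (hαroot k).1 (hxQ k ω) (huQ (k + 1) ω) hxstarQ
        (hArec k ▸ hy k ω) (hArec k ▸ hx k ω) hψ (hb _ (hxQ (k + 1) ω)).2
        (hb _ (hxQ k ω)).1 (hb _ hxstarQ).1 (hmin k ω)
      rw [← hArec k] at h
      rw [sum_range_succ]
      simp only [hc] at ih ⊢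
      linarith
  have hcint : ∀ k, Integrable (c k) μ := fun k =>
    (((hδ1int k).const_mul _).add ((hδ1starint k).const_mul _)).add ((hδ2int k).const_mul _)
  have hz1 : ∀ k, ∫ ω, δ1 k ω (x k ω) (y (k + 1) ω) ∂μ = 0 := fun k => by
    rw [← integral_condExp (ℱ.le k), integral_congr_ae (hδ1unbiased k)]
    simp
  have hz2 : ∀ k, ∫ ω, δ1 k ω xstar (y (k + 1) ω) ∂μ = 0 := fun k => by
    rw [← integral_condExp (ℱ.le k), integral_congr_ae (hδ1starunbiased k)]
    simp
  have hcval : ∀ k, ∫ ω, c k ω ∂μ = A (k + 1) * ∫ ω, δ2 k ω ∂μ := fun k => by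
    simp only [hc]
    have hδ : Integrable (fun ω => A k * δ1 k ω (x k ω) (y (k + 1) ω)
        + α (k + 1) * δ1 k ω xstar (y (k + 1) ω)) μ :=
      ((hδ1int k).const_mul _).add ((hδ1starint k).const_mul _)
    rw [integral_add hδ ((hδ2int k).const_mul _),
      integral_add ((hδ1int k).const_mul _) ((hδ1starint k).const_mul _)]
    simp only [integral_const_mul, hz1, hz2]
    ring
  have hsum : ∑ k ∈ range N, ∫ ω, c k ω ∂μ ≤ N * (A N * δ2hat) := by
    have h : ∀ k ∈ range N, ∫ ω, c k ω ∂μ ≤ A N * δ2hat := fun k hk => by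
      rw [hcval]
      exact (mul_le_mul_of_nonneg_left (hδ2exp k) (hAnn _)).trans
        (mul_le_mul_of_nonneg_right (hAmono (mem_range.mp hk)) hδ2hat)
    simpa using sum_le_sum h
  have hE : A N * ((∫ ω, f (x N ω) ∂μ) - f xstar) ≤ R ^ 2 + N * (A N * δ2hat) := by
    have hl : ∫ ω, A N * (f (x N ω) - f xstar) ∂μ = A N * ((∫ ω, f (x N ω) ∂μ) - f xstar) := by
      rw [integral_const_mul, integral_sub hfint (integrable_const _)]
      simp
    have hr : ∫ ω, (R ^ 2 + ∑ i ∈ range N, c i ω) ∂μ = R ^ 2 + ∑ i ∈ range N, ∫ ω, c i ω ∂μ := by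
      rw [integral_add (integrable_const _) (integrable_finsetSum _ fun i _ => hcint i),
        integral_finsetSum _ fun i _ => hcint i]
      simp
    have hm : ∫ ω, A N * (f (x N ω) - f xstar) ∂μ ≤ ∫ ω, (R ^ 2 + ∑ i ∈ range N, c i ω) ∂μ := by
      refine integral_mono ((hfint.sub (integrable_const _)).const_mul _)
        ((integrable_const _).add (integrable_finsetSum _ fun i _ => hcint i)) fun ω => ?_
      have h := hpath N ω
      have h0 : 0 ≤ (1 / 2) * ‖xstar - u N ω‖ ^ 2 := by positivity
      simp only
      linarith
    linarith
  have hNpos : (0 : ℝ) < N := by exact_mod_cast hN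
  have hAlow : (N : ℝ) ^ 2 ≤ 4 * L * A N := by
    have h := pow_le_pow_left₀ hNpos.le (hα N).2 2
    rw [(hα N).1]
    linarith
  have hAN : 0 < A N := by
    have h : 0 < 4 * L * A N := lt_of_lt_of_le (by positivity) hAlow
    exact pos_of_mul_pos_right h (by positivity)
  have hfin : (∫ ω, f (x N ω) ∂μ) - f xstar ≤ R ^ 2 / A N + N * δ2hat := by
    rw [div_add' _ _ _ hAN.ne', le_div_iff₀ hAN]
    linarith
  have hrate : R ^ 2 / A N ≤ 4 * L * R ^ 2 / N ^ 2 := by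
    rw [div_le_div_iff₀ hAN (by positivity)]
    nlinarith [mul_le_mul_of_nonneg_left hAlow (sq_nonneg R)]
  linarith
end
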